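/- Let n ≥ 2 be an integer and G = (ℤ/5ℤ)^n. Let H < G be a subgroup of index 5, let e ∈ G be an element with G = H ⊕ ⟨e⟩, and let S ⊆ H satisfy |S| = (|H|−1)/2 and 0 ∉ 2S. Set A := (H∖{0}) ∪ (e + S) ∪ {2e}. Then |A| = (3·5^(n-1) − 1)/2, 3A = G∖{4e}, and 4e ∈ 3(A ∪ {g}) for every g ∈ G∖A. -/

import Mathlib

open Pointwise

/-- `itSum k A` is the `k`-fold sumset `kA = {a₁ + ⋯ + a_k : aᵢ ∈ A}`. -/
def itSum {G : Type*} [AddCommGroup G] : ℕ → Set G → Set G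
  | 0, _ => {0}
  | (k + 1), A => itSum k A + A

lemma mem_itSum3 {G : Type*} [AddCommGroup G] (A : Set G) (x : G) :
    x ∈ itSum 3 A ↔ ∃ a ∈ A, ∃ b ∈ A, ∃ c ∈ A, a + b + c = x := by
  simp only [itSum, Set.mem_add, Set.mem_singleton_iff]
  constructor
  · rintro ⟨_, ⟨_, ⟨_, rfl, a, ha, rfl⟩, b, hb, rfl⟩, c, hc, rfl⟩
    exact ⟨a, ha, b, hb, c, hc, by simp⟩
  · rintro ⟨a, ha, b, hb, c, hc, rfl⟩
    exact ⟨_, ⟨_, ⟨_, rfl, a, ha, rfl⟩, b, hb, rfl⟩, c, hc, by simp⟩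

lemma mem_itSum2 {G : Type*} [AddCommGroup G] (A : Set G) (a b : G) (ha : a ∈ A) (hb : b ∈ A) :
    a + b ∈ itSum 2 A := by
  simp only [itSum, Set.mem_add, Set.mem_singleton_iff]
  exact ⟨_, ⟨_, rfl, a, ha, rfl⟩, b, hb, by simp⟩

set_option maxHeartbeats 2000000 in
/-- Let `n ≥ 2`, `G = (ℤ/5ℤ)ⁿ`, `H < G` of index 5, `e ∈ G` with `G = H ⊕ ⟨e⟩`, and
`S ⊆ H` with `|S| = (|H|−1)/2` and `0 ∉ 2S`. For `A := (H∖{0}) ∪ (e+S) ∪ {2e}` we have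
`|A| = (3·5^(n-1)−1)/2`, `3A = G∖{4e}`, and `4e ∈ 3(A ∪ {g})` for every `g ∉ A`. -/
theorem stmt9 (n : ℕ) (hn : 2 ≤ n) (H : AddSubgroup (Fin n → ZMod 5))
    (hH : H.index = 5) (e : Fin n → ZMod 5)
    (he : IsCompl H (AddSubgroup.zmultiples e))
    (S : Set (Fin n → ZMod 5)) (hSH : S ⊆ (H : Set (Fin n → ZMod 5)))
    (hScard : S.ncard = (Nat.card H - 1) / 2)
    (hS2 : (0 : Fin n → ZMod 5) ∉ itSum 2 S)
    (A : Set (Fin n → ZMod 5))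
    (hA : A = ((H : Set (Fin n → ZMod 5)) \ {0}) ∪ (e +ᵥ S) ∪ {2 • e}) :
    A.ncard = (3 * 5 ^ (n - 1) - 1) / 2 ∧
    itSum 3 A = Set.univ \ {4 • e} ∧
    ∀ g ∉ A, 4 • e ∈ itSum 3 (A ∪ {g}) := by
  have h5 : ∀ x : Fin n → ZMod 5, (5 : ℕ) • x = 0 := by
    intro x; ext i; simp only [Pi.smul_apply, nsmul_eq_mul, Pi.zero_apply]
    have : ((5 : ℕ) : ZMod 5) = 0 := by decide
    rw [this, zero_mul]
  have hcard : Nat.card H = 5 ^ (n - 1) := by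
    have h1 := H.card_mul_index
    rw [hH] at h1
    have h2 : Nat.card (Fin n → ZMod 5) = 5 ^ n := by simp
    rw [h2] at h1
    obtain ⟨m, rfl⟩ : ∃ m, n = m + 1 := ⟨n - 1, by omega⟩
    rw [pow_succ] at h1
    simpa using h1
  have hcard5 : 5 ≤ Nat.card H := by
    rw [hcard]
    calc 5 = 5 ^ 1 := by norm_num
      _ ≤ 5 ^ (n - 1) := Nat.pow_le_pow_right (by norm_num) (by omega)
  have hodd : Nat.card H % 2 = 1 := by
    rw [hcard]; exact Nat.odd_iff.mp (Odd.pow (by decide))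
  have hHne : ((H : Set (Fin n → ZMod 5)) \ {0}).ncard = Nat.card H - 1 := by
    rw [Set.ncard_sdiff_singleton_of_mem (by exact H.zero_mem)]
    rfl
  have hst : ∀ s ∈ S, ∀ t ∈ S, s + t ≠ 0 := fun s hs t ht h => hS2 (h ▸ mem_itSum2 S s t hs ht)
  have h0S : (0 : Fin n → ZMod 5) ∉ S := fun h => hst 0 h 0 h (by simp)
  have hcov : ∀ h ∈ H, h ≠ 0 → h ∈ S ∨ -h ∈ S := by
    have hdis : Disjoint S (-S) := by
      rw [Set.disjoint_left]
      intro x hx hx'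
      exact hst x hx (-x) hx' (by simp)
    have hn' : (-S).ncard = S.ncard := Set.natCard_neg S
    have heq : S ∪ -S = (H : Set (Fin n → ZMod 5)) \ {0} := by
      apply Set.eq_of_subset_of_ncard_le
      · rintro x (hx | hx)
        · exact ⟨hSH hx, fun h => h0S (by simpa [Set.mem_singleton_iff.mp h] using hx)⟩
        · refine ⟨by simpa using H.neg_mem (hSH hx), fun h => h0S ?_⟩
          simpa [Set.mem_singleton_iff.mp h] using hx
      · rw [Set.ncard_union_eq hdis, hn', hHne, hScard]; omega
      · exact Set.toFinite _
    intro h hh h0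
    have : h ∈ S ∪ -S := by rw [heq]; exact ⟨hh, h0⟩
    simpa using this
  have hS1 : ∀ x, ∃ s ∈ S, s ≠ x := by
    intro x
    apply Set.exists_ne_of_one_lt_ncard
    rw [hScard]; omega
  obtain ⟨a, haH, ha0⟩ : ∃ a ∈ H, a ≠ 0 := by
    obtain ⟨s, hs, h⟩ := hS1 0
    exact ⟨s, hSH hs, h⟩
  have h2H : ∀ h ∈ H, ∃ x ∈ H, x ≠ 0 ∧ ∃ y ∈ H, y ≠ 0 ∧ x + y = h := by
    intro h hh
    by_cases h0 : h = 0
    · exact ⟨a, haH, ha0, -a, H.neg_mem haH, by simpa, by simp [h0]⟩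
    · have e1 : (3 : ℕ) • h + (3 : ℕ) • h = h := by
        have := h5 h
        calc _ = (5 : ℕ) • h + h := by module
          _ = h := by rw [this, zero_add]
      have e2 : (3 : ℕ) • h ≠ 0 := by
        intro h3; rw [h3] at e1; exact h0 (by simpa using e1.symm)
      exact ⟨_, H.nsmul_mem hh 3, e2, _, H.nsmul_mem hh 3, e2, e1⟩
  have heH : e ∉ H := by
    intro h
    have h1 : H = ⊤ := by
      rw [← he.sup_eq_top, eq_comm, sup_eq_left]
      simpa using h
    rw [h1] at hH; simp at hH
  have hint : ∀ k : ℕ, k • e ∈ H → k • e = 0 := by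
    intro k hk
    have : k • e ∈ H ⊓ AddSubgroup.zmultiples e :=
      ⟨hk, AddSubgroup.nsmul_mem _ (AddSubgroup.mem_zmultiples e) k⟩
    rw [he.inf_eq_bot] at this
    simpa using this
  have hord : addOrderOf e = 5 := by
    haveI : Fact (Nat.Prime 5) := ⟨by norm_num⟩
    exact addOrderOf_eq_prime (h5 e) (fun h => heH (h ▸ H.zero_mem))
  have huniq : ∀ h ∈ H, ∀ h' ∈ H, ∀ i j : ℕ, h + i • e = h' + j • e → i % 5 = j % 5 ∧ h = h' := by
    intro h hh h' hh' i j hij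
    have key : (i + 4 * j) • e = h' - h := by
      have h5j := h5 (j • e)
      have : i • e = h' - h + j • e := by rw [← add_sub_cancel_left h (i • e), hij]; abel
      calc (i + 4 * j) • e = i • e + (4 * j) • e := add_smul _ _ _
        _ = h' - h + 5 • (j • e) := by rw [this]; module
        _ = _ := by rw [h5j, add_zero]
    have hz := hint (i + 4 * j) (by rw [key]; exact H.sub_mem hh' hh)
    have hd := addOrderOf_dvd_of_nsmul_eq_zero hz
    rw [hord] at hd
    rw [hz] at key
    exact ⟨by omega, (sub_eq_zero.mp key.symm).symm⟩
  have hrep : ∀ g, ∃ h ∈ H, ∃ i < 5, g = h + i • e := by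
    intro g
    have : g ∈ H ⊔ AddSubgroup.zmultiples e := by rw [he.sup_eq_top]; trivial
    obtain ⟨h, hh, z, hz, rfl⟩ := AddSubgroup.mem_sup.mp this
    have hfin : IsOfFinAddOrder e := isOfFinAddOrder_of_finite e
    rw [← hfin.mem_multiples_iff_mem_zmultiples, hfin.mem_multiples_iff_mem_range_addOrderOf, hord] at hz
    simp only [Finset.mem_image, Finset.mem_range] at hz
    obtain ⟨i, hi, rfl⟩ := hz
    exact ⟨h, hh, i, hi, rfl⟩
  have hA0 : ∀ h ∈ H, h ≠ 0 → h ∈ A := by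
    intro h hh h0; rw [hA]; exact Or.inl (Or.inl ⟨hh, h0⟩)
  have hA1 : ∀ s ∈ S, s + e ∈ A := by
    intro s hs; rw [hA, add_comm]; exact Or.inl (Or.inr ⟨s, hs, rfl⟩)
  have hA2 : 2 • e ∈ A := by rw [hA]; exact Or.inr rfl
  have hAc : ∀ x ∈ A, ∃ h ∈ H, ∃ i : ℕ, x = h + i • e ∧
      ((i = 0 ∧ h ≠ 0) ∨ (i = 1 ∧ h ∈ S) ∨ (i = 2 ∧ h = 0)) := by
    intro x hx
    rw [hA] at hx
    rcases hx with (⟨h, h0⟩ | ⟨s, hs, rfl⟩) | h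
    · exact ⟨x, h, 0, by simp, Or.inl ⟨rfl, h0⟩⟩
    · exact ⟨s, hSH hs, 1, by simp [add_comm], Or.inr (Or.inl ⟨rfl, hs⟩)⟩
    · exact ⟨0, H.zero_mem, 2, by simpa using h, Or.inr (Or.inr ⟨rfl, rfl⟩)⟩
  refine ⟨?_, ?_, ?_⟩
  · have d1 : Disjoint ((H : Set (Fin n → ZMod 5)) \ {0}) (e +ᵥ S) := by
      rw [Set.disjoint_left]
      rintro x ⟨hx, -⟩ ⟨s, hs, h⟩
      have := huniq x hx s (hSH hs) 0 1 (by rw [← h]; simp [add_comm])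
      omega
    have d2 : Disjoint (((H : Set (Fin n → ZMod 5)) \ {0}) ∪ (e +ᵥ S)) {2 • e} := by
      rw [Set.disjoint_left]
      rintro x hx h
      rw [Set.mem_singleton_iff] at h
      rcases hx with ⟨hx, -⟩ | ⟨s, hs, h'⟩
      · have := huniq x hx 0 H.zero_mem 0 2 (by simpa using h)
        omega
      · have := huniq s (hSH hs) 0 H.zero_mem 1 2 (by rw [zero_add, ← h, ← h']; simp [add_comm])
        omega
    have hv : (e +ᵥ S).ncard = S.ncard := Set.ncard_image_of_injective S (add_right_injective e)
    rw [hA, Set.ncard_union_eq d2, Set.ncard_union_eq d1, hv, hHne, hScard, Set.ncard_singleton,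
      ← hcard]
    omega
  · ext g
    rw [mem_itSum3]
    simp only [Set.mem_sdiff, Set.mem_univ, true_and, Set.mem_singleton_iff]
    constructor
    · rintro ⟨x, hx, y, hy, z, hz, rfl⟩ h4
      obtain ⟨h1, hh1, i, rfl, c1⟩ := hAc x hx
      obtain ⟨h2, hh2, j, rfl, c2⟩ := hAc y hy
      obtain ⟨h3, hh3, k, rfl, c3⟩ := hAc z hz
      have := huniq (h1 + h2 + h3) (H.add_mem (H.add_mem hh1 hh2) hh3) 0 H.zero_mem (i + j + k) 4
        (by rw [zero_add, ← h4]; module)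
      obtain ⟨m, hs⟩ := this
      rcases c1 with ⟨rfl, c1⟩ | ⟨rfl, c1⟩ | ⟨rfl, c1⟩ <;>
      rcases c2 with ⟨rfl, c2⟩ | ⟨rfl, c2⟩ | ⟨rfl, c2⟩ <;>
      rcases c3 with ⟨rfl, c3⟩ | ⟨rfl, c3⟩ | ⟨rfl, c3⟩ <;>
      first
      | omega
      | exact c1 (by simpa only [c2, c3, add_zero] using hs)
      | exact c2 (by simpa only [c1, c3, add_zero, zero_add] using hs)
      | exact c3 (by simpa only [c1, c2, add_zero, zero_add] using hs)
      | (subst c1; exact hst _ c2 _ c3 (by simpa using hs))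
      | (subst c2; exact hst _ c1 _ c3 (by simpa using hs))
      | (subst c3; exact hst _ c1 _ c2 (by simpa using hs))
    · intro hg
      obtain ⟨h, hh, i, hi, rfl⟩ := hrep g
      interval_cases i
      · obtain ⟨s, hs, hne⟩ := hS1 h
        have hs0 : h - s ≠ 0 := fun h' => hne (sub_eq_zero.mp h').symm
        obtain ⟨x, hx, hx0, y, hy, hy0, hxy⟩ := h2H (h - s) (H.sub_mem hh (hSH hs))
        exact ⟨x, hA0 x hx hx0, y, hA0 y hy hy0, s, hA0 s (hSH hs) (fun h => h0S (h ▸ hs)),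
          by rw [hxy]; simp⟩
      · obtain ⟨s, hs, -⟩ := hS1 0
        obtain ⟨x, hx, hx0, y, hy, hy0, hxy⟩ := h2H (h - s) (H.sub_mem hh (hSH hs))
        exact ⟨x, hA0 x hx hx0, y, hA0 y hy hy0, s + e, hA1 s hs, by rw [hxy]; module⟩
      · obtain ⟨x, hx, hx0, y, hy, hy0, hxy⟩ := h2H h hh
        exact ⟨x, hA0 x hx hx0, y, hA0 y hy hy0, _, hA2, by rw [hxy]⟩
      · obtain ⟨s, hs, hne⟩ := hS1 h
        have hs0 : h - s ≠ 0 := fun h' => hne (sub_eq_zero.mp h').symm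
        exact ⟨h - s, hA0 _ (H.sub_mem hh (hSH hs)) hs0, s + e, hA1 s hs, _, hA2, by module⟩
      · exact ⟨h, hA0 h hh (fun h0 => hg (by simp [h0])), _, hA2, _, hA2, by module⟩
  · intro g hg
    rw [mem_itSum3]
    have hgm : g ∈ A ∪ {g} := Or.inr rfl
    obtain ⟨h, hh, i, hi, rfl⟩ := hrep g
    interval_cases i
    · have h0 : h = 0 := by
        by_contra h0
        exact hg (by simpa using hA0 h hh h0)
      exact ⟨_, hgm, _, Or.inl hA2, _, Or.inl hA2, by rw [h0]; module⟩
    · by_cases h0 : h = 0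
      · exact ⟨_, hgm, _, hgm, _, Or.inl hA2, by rw [h0]; module⟩
      · rcases hcov h hh h0 with hs | hs
        · exact absurd (by simpa using hA1 h hs) hg
        · exact ⟨_, hgm, _, Or.inl (hA1 _ hs), _, Or.inl hA2, by module⟩
    · have h0 : h ≠ 0 := by
        intro h0
        exact hg (by simpa [h0] using hA2)
      exact ⟨_, hgm, _, Or.inl hA2, _, Or.inl (hA0 (-h) (H.neg_mem hh) (by simpa using h0)),
        by module⟩
    · obtain ⟨s, hs, hne⟩ := hS1 (-h)
      have hs0 : -h - s ≠ 0 := fun h' => hne (sub_eq_zero.mp h').symm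
      exact ⟨_, hgm, _, Or.inl (hA1 s hs), _,
        Or.inl (hA0 _ (H.sub_mem (H.neg_mem hh) (hSH hs)) hs0), by module⟩
    · obtain ⟨x, hx, hx0, y, hy, hy0, hxy⟩ := h2H (-h) (H.neg_mem hh)
      exact ⟨_, hgm, x, Or.inl (hA0 x hx hx0), y, Or.inl (hA0 y hy hy0),
        by rw [add_assoc, hxy]; module⟩
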